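/- Let n, p, k be positive integers with k ≤ n. Let S⁻ ⊆ {k+1,…,n} and S⁺ ⊆ {1,…,k} be finite sets satisfying: (i) |S⁻| = |S⁺| ≤ p/2, (ii) S⁻ ⊆ {k+1,…,k+p−1} and S⁺ ⊆ {k−p+2,…,k}, and (iii) if both are nonempty then max S⁻ − min S⁺ < p. Then there exists a permutation σ of {1,…,n} satisfying the Balas–Simonetti condition with parameter p (i + p ≤ j implies σ(i) < σ(j)) such that σ(i) = i for all i ∉ S⁻ ∪ S⁺ and σ restricts to a bijection from S⁻ onto S⁺. -/

import Mathlib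

/-!
A permutation whose moved points are pairwise less than `p` apart satisfies the Balas–Simonetti
condition: if `i + p ≤ j`, then `i` and `j` cannot both be moved, and a single moved point stays
within distance `p` of its old position, too little to overtake the other one. Here every moved
point lies between `min S⁺` and `max S⁻`, so any permutation of `S⁻ ∪ S⁺` extending a bijection
`S⁻ ≃ S⁺` will do.
-/

/-- The Balas–Simonetti precedence condition with parameter `p`: `i` precedes `j` in the
arrangement `σ` whenever `j` exceeds `i` by at least `p`. It is imposed on all of `α`, not only on
an interval `{1, …, n}`. -/
def IsBalasSimonetti {α : Type*} [Add α] [Preorder α] (p : α) (σ : Equiv.Perm α) : Prop :=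
  ∀ ⦃i j : α⦄, i + p ≤ j → σ i < σ j

theorem isBalasSimonetti_of_forall_ne_lt_add {α : Type*} [AddCommMonoid α] [PartialOrder α]
    [IsOrderedCancelAddMonoid α] {p : α} {σ : Equiv.Perm α} (hp : 0 < p)
    (hσ : ∀ a b, σ a ≠ a → σ b ≠ b → a < b + p) : IsBalasSimonetti p σ := by
  intro i j hij
  have moved_apply {a : α} (ha : σ a ≠ a) : σ (σ a) ≠ σ a := σ.injective.ne ha
  by_cases hi : σ i = i <;> by_cases hj : σ j = j
  · calc
      σ i = i := hi
      _ < i + p := lt_add_of_pos_right i hp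
      _ ≤ j := hij
      _ = σ j := hj.symm
  · have : i + p < σ j + p := hij.trans_lt (hσ j (σ j) hj (moved_apply hj))
    simpa only [hi] using lt_of_add_lt_add_right this
  · calc
      σ i < i + p := hσ (σ i) i (moved_apply hi) hi
      _ ≤ j := hij
      _ = σ j := hj.symm
  · exact absurd (hσ j i hj hi) hij.not_gt

theorem exists_perm_extending_equiv {α : Type*} [DecidableEq α] {S T : Finset α} (e : S ≃ T) :
    ∃ σ : Equiv.Perm α, (∀ x : S, σ x = e x) ∧ ∀ x ∉ S ∪ T, σ x = x := by
  let inclS : S → ↥(S ∪ T) := Set.inclusion Finset.subset_union_left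
  let inclT : T → ↥(S ∪ T) := Set.inclusion Finset.subset_union_right
  obtain ⟨τ, hτ⟩ := Equiv.Perm.exists_extending_pair inclS (inclT ∘ e)
    (Set.inclusion_injective _) ((Set.inclusion_injective _).comp e.injective)
  refine ⟨Equiv.Perm.ofSubtype τ, fun x => ?_, fun x hx => ?_⟩
  · calc
      Equiv.Perm.ofSubtype τ x = τ (inclS x) := Equiv.Perm.ofSubtype_apply_coe τ (inclS x)
      _ = e x := congrArg Subtype.val (hτ x)
  · exact Equiv.Perm.ofSubtype_apply_of_not_mem τ hx

theorem image_eq_of_forall_apply_eq_equiv {α β : Type*} [DecidableEq β] {S : Finset α}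
    {T : Finset β} {f : α → β} (e : S ≃ T) (hf : ∀ x : S, f x = e x) : S.image f = T := by
  ext y
  rw [Finset.mem_image]
  constructor
  · rintro ⟨x, hx, rfl⟩
    exact hf ⟨x, hx⟩ ▸ (e ⟨x, hx⟩).2
  · intro hy
    exact ⟨e.symm ⟨y, hy⟩, (e.symm ⟨y, hy⟩).2, by rw [hf, e.apply_symm_apply]⟩

theorem union_subset_Icc_min'_max' {α : Type*} [LinearOrder α] {S T : Finset α}
    (hTS : ∀ s ∈ S, ∀ t ∈ T, t ≤ s) (hS : S.Nonempty) (hT : T.Nonempty) :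
    (↑(S ∪ T) : Set α) ⊆ Set.Icc (T.min' hT) (S.max' hS) := by
  intro x hx
  rcases Finset.mem_union.mp hx with hxS | hxT
  · exact ⟨hTS x hxS _ (T.min'_mem hT), S.le_max' x hxS⟩
  · exact ⟨T.min'_le x hxT, hTS _ (S.max'_mem hS) x hxT⟩

theorem lt_add_of_mem_union_of_max'_lt_min'_add {α : Type*} [Add α] [LinearOrder α]
    [AddRightMono α] {S T : Finset α} {p : α} (hTS : ∀ s ∈ S, ∀ t ∈ T, t ≤ s)
    (hST : S.Nonempty ↔ T.Nonempty)
    (hdist : ∀ (hS : S.Nonempty) (hT : T.Nonempty), S.max' hS < T.min' hT + p) :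
    ∀ a ∈ S ∪ T, ∀ b ∈ S ∪ T, a < b + p := by
  intro a ha b hb
  have hne : S.Nonempty ∨ T.Nonempty := Finset.union_nonempty.mp ⟨a, ha⟩
  have hS : S.Nonempty := hne.elim id hST.mpr
  have hT : T.Nonempty := hST.mp hS
  have hIcc := union_subset_Icc_min'_max' hTS hS hT
  calc
    a ≤ S.max' hS := (hIcc ha).2
    _ < T.min' hT + p := hdist hS hT
    _ ≤ b + p := add_le_add_left (hIcc hb).1 p

theorem stmt_5_general {α : Type*} [AddCommMonoid α] [PartialOrder α]
    [IsOrderedCancelAddMonoid α] [DecidableEq α] {p : α} (hp : 0 < p) {S T : Finset α}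
    (hdiam : ∀ a ∈ S ∪ T, ∀ b ∈ S ∪ T, a < b + p) (e : S ≃ T) :
    ∃ σ : Equiv.Perm α,
      IsBalasSimonetti p σ ∧ (∀ x ∉ S ∪ T, σ x = x) ∧ ∀ x : S, σ x = e x := by
  obtain ⟨σ, hext, hfix⟩ := exists_perm_extending_equiv e
  have mem_of_moved {a : α} (ha : σ a ≠ a) : a ∈ S ∪ T := not_imp_comm.mp (hfix a) ha
  exact ⟨σ, isBalasSimonetti_of_forall_ne_lt_add hp fun a b ha hb =>
    hdiam a (mem_of_moved ha) b (mem_of_moved hb), hfix, hext⟩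

/-- Sufficiency of the structural conditions on an encoded meta state
(S⁻, S⁺): there is a Balas–Simonetti permutation with parameter p fixing
everything outside S⁻ ∪ S⁺ and mapping S⁻ bijectively onto S⁺. -/
theorem stmt_5 (n p k : ℕ) (hn : 1 ≤ n) (hp : 1 ≤ p) (hk : 1 ≤ k) (hkn : k ≤ n)
    (Sm Sp : Finset ℕ)
    (hSm : Sm ⊆ Finset.Icc (k + 1) n) (hSp : Sp ⊆ Finset.Icc 1 k)
    (hcard : Sm.card = Sp.card) (hhalf : 2 * Sm.card ≤ p)
    (hSm' : Sm ⊆ Finset.Icc (k + 1) (k + p - 1))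
    (hSp' : Sp ⊆ Finset.Icc (k - p + 2) k)
    (hdist : ∀ (h1 : Sm.Nonempty) (h2 : Sp.Nonempty),
      Sm.max' h1 - Sp.min' h2 < p) :
    ∃ σ : Equiv.Perm ℕ,
      (∀ i j : ℕ, i ∈ Finset.Icc 1 n → j ∈ Finset.Icc 1 n → i + p ≤ j →
        σ i < σ j) ∧
      (∀ i : ℕ, i ∉ Sm ∪ Sp → σ i = i) ∧
      Sm.image σ = Sp := by
  have hle : ∀ s ∈ Sm, ∀ t ∈ Sp, t ≤ s := fun s hs t ht => by
    have := Finset.mem_Icc.mp (hSm hs)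
    have := Finset.mem_Icc.mp (hSp ht)
    omega
  have hne : Sm.Nonempty ↔ Sp.Nonempty := by rw [← Finset.card_pos, hcard, Finset.card_pos]
  have hdiam := lt_add_of_mem_union_of_max'_lt_min'_add hle hne
    fun h1 h2 => lt_add_of_tsub_lt_left (hdist h1 h2)
  obtain ⟨σ, hσ, hfix, hext⟩ := stmt_5_general hp hdiam (Finset.equivOfCardEq hcard)
  exact ⟨σ, fun _ _ _ _ hij => hσ hij, hfix, image_eq_of_forall_apply_eq_equiv _ hext⟩
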